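/- Let $\alpha < \beta$ be real numbers and let $u : \mathbb{B}^2 \to (\alpha, \beta)$ be a real-valued harmonic function on the unit disk. Then for every $z \in \mathbb{B}^2$, $|\nabla u(z)| \leq \frac{2(\beta-\alpha)}{\pi} \cdot \frac{\cos\left( \frac{\pi}{\beta-\alpha}\left( u(z) - \frac{\alpha+\beta}{2} \right) \right)}{1 - |z|^2}$. -/

import Mathlib

open Metric Set

/-- A real-valued function `u` on a subset of `ℂ ≅ ℝ²` is harmonic if it is twice
continuously differentiable and satisfies the Laplace equation
`∂²u/∂x² + ∂²u/∂y² = 0`. -/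
def IsHarmonicOn (u : ℂ → ℝ) (G : Set ℂ) : Prop :=
  ContDiffOn ℝ 2 u G ∧ ∀ z ∈ G,
    iteratedFDeriv ℝ 2 u z ![1, 1] + iteratedFDeriv ℝ 2 u z ![Complex.I, Complex.I] = 0

lemma aux_harm (u : ℂ → ℝ) (hu : IsHarmonicOn u (ball (0 : ℂ) 1)) :
    InnerProductSpace.HarmonicOnNhd u (ball (0 : ℂ) 1) := by
  intro x hx
  refine ⟨hu.1.contDiffAt (isOpen_ball.mem_nhds hx), ?_⟩
  filter_upwards [isOpen_ball.mem_nhds hx] with y hy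
  rw [InnerProductSpace.laplacian_eq_iteratedFDeriv_complexPlane]
  exact hu.2 y hy

lemma aux_mob (z ζ : ℂ) (hz : ‖z‖ < 1) (hζ : ‖ζ‖ < 1) :
    1 + (starRingEnd ℂ) z * ζ ≠ 0 ∧ ‖(ζ + z) / (1 + (starRingEnd ℂ) z * ζ)‖ < 1 := by
  have h1 : ‖(starRingEnd ℂ) z * ζ‖ < 1 := by
    rw [norm_mul, Complex.norm_conj]
    nlinarith [norm_nonneg z, norm_nonneg ζ]
  have h0 : 1 + (starRingEnd ℂ) z * ζ ≠ 0 := by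
    intro h
    have : (starRingEnd ℂ) z * ζ = -1 := by linear_combination h
    rw [this] at h1
    simp at h1
  refine ⟨h0, ?_⟩
  rw [norm_div, div_lt_one (norm_pos_iff.2 h0)]
  apply lt_of_pow_lt_pow_left₀ 2 (norm_nonneg _)
  have hz2 : ‖z‖ ^ 2 < 1 := by nlinarith [norm_nonneg z]
  have hζ2 : ‖ζ‖ ^ 2 < 1 := by nlinarith [norm_nonneg ζ]
  rw [← Complex.normSq_eq_norm_sq, Complex.normSq_apply] at hz2 hζ2 ⊢
  rw [← Complex.normSq_eq_norm_sq, Complex.normSq_apply]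
  simp
  nlinarith [mul_pos (sub_pos.2 hz2) (sub_pos.2 hζ2)]

lemma aux_half (w w0 : ℂ) (hw : 0 < w.re) (hw0 : 0 < w0.re) :
    w + (starRingEnd ℂ) w0 ≠ 0 ∧ ‖(w - w0) / (w + (starRingEnd ℂ) w0)‖ < 1 := by
  have h0 : w + (starRingEnd ℂ) w0 ≠ 0 := by
    intro h
    have := congrArg Complex.re h
    simp at this
    linarith
  refine ⟨h0, ?_⟩
  rw [norm_div, div_lt_one (norm_pos_iff.2 h0)]
  apply lt_of_pow_lt_pow_left₀ 2 (norm_nonneg _)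
  rw [← Complex.normSq_eq_norm_sq, Complex.normSq_apply, ← Complex.normSq_eq_norm_sq,
    Complex.normSq_apply]
  simp
  nlinarith [mul_pos hw hw0]

lemma aux_pick (G : ℂ → ℂ) (hG : DifferentiableOn ℂ G (ball (0 : ℂ) 1))
    (hre : ∀ z ∈ ball (0 : ℂ) 1, 0 < (G z).re) (z : ℂ) (hz : z ∈ ball (0 : ℂ) 1) :
    ‖deriv G z‖ * (1 - ‖z‖ ^ 2) ≤ 2 * (G z).re := by
  have hz' : ‖z‖ < 1 := by simpa using hz
  set T : ℂ → ℂ := fun ζ => (ζ + z) / (1 + (starRingEnd ℂ) z * ζ) with hT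
  set φ : ℂ → ℂ := fun w => (w - G z) / (w + (starRingEnd ℂ) (G z)) with hφ
  have hTm : ∀ ζ ∈ ball (0 : ℂ) 1, T ζ ∈ ball (0 : ℂ) 1 := fun ζ hζ => by
    simpa [hT] using (aux_mob z ζ hz' (by simpa using hζ)).2
  have hTd : DifferentiableOn ℂ T (ball (0 : ℂ) 1) := by
    intro ζ hζ
    have := (aux_mob z ζ hz' (by simpa using hζ)).1
    apply DifferentiableAt.differentiableWithinAt
    exact DifferentiableAt.div (by fun_prop) (by fun_prop) this
  have hφd : DifferentiableOn ℂ φ {w | 0 < w.re} := by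
    intro w hw
    have := (aux_half w (G z) hw (hre z hz)).1
    apply DifferentiableAt.differentiableWithinAt
    exact DifferentiableAt.div (by fun_prop) (by fun_prop) this
  have hT0 : T 0 = z := by simp [hT]
  have hφ0 : φ (G z) = 0 := by simp [hφ]
  have hH : DifferentiableOn ℂ (φ ∘ G ∘ T) (ball (0 : ℂ) 1) :=
    hφd.comp (hG.comp hTd hTm) (fun ζ hζ => hre _ (hTm ζ hζ))
  have hS : ‖deriv (φ ∘ G ∘ T) 0‖ ≤ 1 := by
    apply Complex.norm_deriv_le_one_of_mapsTo_ball hH _ one_pos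
    intro ζ hζ
    have : (φ ∘ G ∘ T) 0 = 0 := by simp [hT0, hφ0]
    rw [this, mem_closedBall_zero_iff]
    exact (aux_half _ _ (hre _ (hTm ζ hζ)) (hre z hz)).2.le
  have hTd0 : HasDerivAt T (1 - (‖z‖ : ℂ) ^ 2) 0 := by
    have : HasDerivAt T _ 0 := ((hasDerivAt_id (0 : ℂ)).add_const z).div
      (((hasDerivAt_id (0 : ℂ)).const_mul ((starRingEnd ℂ) z)).const_add 1) (by simp)
    convert this using 1
    simp [← Complex.mul_conj']
  have hsum : G z + (starRingEnd ℂ) (G z) = ((2 * (G z).re : ℝ) : ℂ) := Complex.add_conj _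
  have hpos := hre z hz
  have hne : ((2 * (G z).re : ℝ) : ℂ) ≠ 0 := by
    rw [Complex.ofReal_ne_zero]; positivity
  have hφd0 : HasDerivAt φ (((2 * (G z).re : ℝ) : ℂ)⁻¹) (G z) := by
    have : HasDerivAt φ _ (G z) := ((hasDerivAt_id (G z)).sub_const (G z)).div
      ((hasDerivAt_id (G z)).add_const ((starRingEnd ℂ) (G z))) (by change G z + (starRingEnd ℂ) (G z) ≠ 0; rw [hsum]; exact hne)
    convert this using 1
    simp only [id, hsum]
    field_simp
    ring
  have hGd : HasDerivAt G (deriv G z) z :=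
    (hG.differentiableAt (isOpen_ball.mem_nhds hz)).hasDerivAt
  have hc : HasDerivAt (φ ∘ G ∘ T)
      (((2 * (G z).re : ℝ) : ℂ)⁻¹ * (deriv G z * (1 - (‖z‖ : ℂ) ^ 2))) 0 :=
    HasDerivAt.comp 0 (h₂ := φ) (h := G ∘ T) (by rw [Function.comp_apply, hT0]; exact hφd0)
      (HasDerivAt.comp 0 (h₂ := G) (by rw [hT0]; exact hGd) hTd0)
  rw [hc.deriv] at hS
  have h1 : (1 : ℂ) - (‖z‖ : ℂ) ^ 2 = ((1 - ‖z‖ ^ 2 : ℝ) : ℂ) := by push_cast; ring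
  have h2 : 0 < 1 - ‖z‖ ^ 2 := by nlinarith [norm_nonneg z]
  rw [h1, norm_mul, norm_mul, norm_inv, Complex.norm_real, Complex.norm_real,
    Real.norm_of_nonneg h2.le, Real.norm_of_nonneg (by positivity)] at hS
  rwa [inv_mul_le_iff₀ (by positivity), mul_one] at hS

/-- Chen-type gradient estimate: if `u : 𝔹² → (α, β)` is a real-valued harmonic function on
the unit disk, then for every `z ∈ 𝔹²`,
`|∇u(z)| ≤ (2(β-α)/π) · cos((π/(β-α))(u(z)-(α+β)/2))/(1-|z|²)`. -/
theorem stmt_14 (α β : ℝ) (hαβ : α < β) (u : ℂ → ℝ)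
    (hu : IsHarmonicOn u (ball (0 : ℂ) 1))
    (hrange : ∀ z ∈ ball (0 : ℂ) 1, u z ∈ Ioo α β)
    (z : ℂ) (hz : z ∈ ball (0 : ℂ) 1) :
    ‖fderiv ℝ u z‖ ≤ 2 * (β - α) / Real.pi *
      (Real.cos (Real.pi / (β - α) * (u z - (α + β) / 2)) / (1 - ‖z‖ ^ 2)) := by
  obtain ⟨F, hF, hFu⟩ := (aux_harm u hu).exists_analyticOnNhd_ball_re_eq
  have hFd : DifferentiableOn ℂ F (ball (0 : ℂ) 1) := hF.differentiableOn
  have hba : 0 < β - α := sub_pos.2 hαβ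
  have hpi := Real.pi_pos
  have hz' : ‖z‖ < 1 := by simpa using hz
  have h2 : 0 < 1 - ‖z‖ ^ 2 := by nlinarith [norm_nonneg z]
  set κ : ℝ := Real.pi / (β - α) with hκ
  have hκ0 : 0 < κ := by positivity
  set m : ℝ := (α + β) / 2 with hm
  set E : ℂ → ℂ := fun ζ => ((κ : ℂ) * Complex.I) * (F ζ - (m : ℂ)) with hE
  set G : ℂ → ℂ := fun ζ => Complex.exp (E ζ) with hG
  have hGre : ∀ ζ ∈ ball (0 : ℂ) 1,
      (G ζ).re = Real.exp (E ζ).re * Real.cos (κ * (u ζ - m)) := by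
    intro ζ hζ
    have : u ζ = (F ζ).re := (hFu hζ).symm
    simp [hG, hE, Complex.exp_re, this]
  have hcos : ∀ ζ ∈ ball (0 : ℂ) 1, 0 < Real.cos (κ * (u ζ - m)) := by
    intro ζ hζ
    obtain ⟨ha, hb⟩ := hrange ζ hζ
    have e : κ * (β - α) = Real.pi := by rw [hκ]; field_simp
    apply Real.cos_pos_of_mem_Ioo
    constructor
    · nlinarith [mul_pos hκ0 (sub_pos.2 ha)]
    · nlinarith [mul_pos hκ0 (sub_pos.2 hb)]
  have hFz : HasDerivAt F (deriv F z) z :=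
    (hFd.differentiableAt (isOpen_ball.mem_nhds hz)).hasDerivAt
  have hGd : DifferentiableOn ℂ G (ball (0 : ℂ) 1) := by
    simp only [hG, hE]; fun_prop
  have hP := aux_pick G hGd (fun ζ hζ => by
    rw [hGre ζ hζ]; exact mul_pos (Real.exp_pos _) (hcos ζ hζ)) z hz
  have hGz : HasDerivAt G (Complex.exp (E z) * ((κ : ℂ) * Complex.I * deriv F z)) z :=
    ((hFz.sub_const (m : ℂ)).const_mul ((κ : ℂ) * Complex.I)).cexp
  rw [hGz.deriv, hGre z hz, norm_mul, Complex.norm_exp, norm_mul, norm_mul, Complex.norm_I,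
    Complex.norm_real, Real.norm_of_nonneg hκ0.le, mul_one] at hP
  have hP' : κ * ‖deriv F z‖ * (1 - ‖z‖ ^ 2) ≤ 2 * Real.cos (κ * (u z - m)) := by
    have := Real.exp_pos (E z).re
    refine le_of_mul_le_mul_left ?_ this
    linarith
  have hu' : HasFDerivAt u (Complex.reCLM.comp
      ((ContinuousLinearMap.toSpanSingleton ℂ (deriv F z)).restrictScalars ℝ)) z := by
    have := Complex.reCLM.hasFDerivAt.comp z (hFz.hasFDerivAt.restrictScalars ℝ)
    refine this.congr_of_eventuallyEq ?_
    filter_upwards [isOpen_ball.mem_nhds hz] with y hy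
    exact (hFu hy).symm
  have hn : ‖fderiv ℝ u z‖ ≤ ‖deriv F z‖ := by
    rw [hu'.fderiv]
    refine ContinuousLinearMap.opNorm_le_bound _ (norm_nonneg _) fun v => ?_
    simp only [ContinuousLinearMap.comp_apply, Complex.reCLM_apply]
    refine (Complex.abs_re_le_norm _).trans ?_
    simp [mul_comm]
  refine hn.trans ?_
  have e : 2 * (β - α) / Real.pi = 2 / κ := by rw [hκ]; field_simp
  rw [e, div_mul_div_comm, le_div_iff₀ (by positivity)]
  linarith
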